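/- Any two points of SO(3)×ℝ² can be joined by a curve satisfying the rolling constraint: for any (a₀,x₀,y₀) and (a₁,x₁,y₁) with a₀, a₁ ∈ SO(3) and (x₀,y₀), (x₁,y₁) ∈ ℝ², there exists a smooth curve (a,x,y) : [0,1] → M₃(ℝ)×ℝ×ℝ such that a(t) ∈ SO(3) for all t, (a(0),x(0),y(0)) = (a₀,x₀,y₀), (a(1),x(1),y(1)) = (a₁,x₁,y₁), and a'(t) = −M(x'(t),y'(t))·a(t) for all t ∈ [0,1]. -/

import Mathlib

open scoped Matrix

noncomputable section

/-- The skew-symmetric matrix `M(u,v)` with rows `(0,0,−u)`, `(0,0,−v)`, `(u,v,0)`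
appearing in the rolling constraint on `SO(3) × ℝ²`. -/
def rollM (u v : ℝ) : Matrix (Fin 3) (Fin 3) ℝ :=
  !![0, 0, -u; 0, 0, -v; u, v, 0]

/-! Rolling the distance `s` in a fixed direction `θ` multiplies the rotation by
`exp (-s M(cos θ, sin θ))`, a rotation by the angle `s` about the horizontal axis perpendicular to
that direction. The constraint is invariant under right translation of `SO(3) × ℝ²`, so the points
that can be reached from the identity are closed under multiplication, once straight rolls are
reparametrized to start and stop smoothly.

Every rotation `g` is a product of three straight rolls: one carries the north pole `e₃` to `g e₃`,
and what remains of `g` is a rotation about the vertical axis, hence a product of two half turns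
about horizontal axes. Every translation is achieved without any net rotation by rolling `n` full
turns in each of two directions, since a vector of length at most `4πn` is the sum of two vectors of
length `2πn`. -/

section Rodrigues

/-- Rodrigues' formula for `exp (s • K)`, correct when `K ^ 3 = -K`. -/
def rodrigues {A : Type*} [Ring A] [Algebra ℝ A] (K : A) (s : ℝ) : A :=
  1 + Real.sin s • K + (1 - Real.cos s) • K ^ 2

section Algebra

variable {A : Type*} [Ring A] [Algebra ℝ A]

theorem rodrigues_zero (K : A) : rodrigues K 0 = 1 := by
  simp [rodrigues]

theorem rodrigues_nat_mul_two_pi (K : A) (n : ℕ) : rodrigues K (n * (2 * Real.pi)) = 1 := by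
  have hsin : Real.sin (n * (2 * Real.pi)) = 0 := by
    simpa using Real.sin_add_nat_mul_two_pi 0 n
  simp [rodrigues, hsin, Real.cos_nat_mul_two_pi]

theorem rodrigues_neg_left (K : A) (s : ℝ) : rodrigues (-K) s = rodrigues K (-s) := by
  simp [rodrigues]

theorem rodrigues_add {K : A} (hK : K ^ 3 = -K) (s t : ℝ) :
    rodrigues K (s + t) = rodrigues K s * rodrigues K t := by
  have hK₃ : K * K ^ 2 = -K := by rw [← pow_succ', hK]
  have hK₃' : K ^ 2 * K = -K := by rw [← pow_succ, hK]
  have hK₄ : K ^ 2 * K ^ 2 = -K ^ 2 := by rw [pow_two K, mul_assoc, ← pow_two, hK₃, mul_neg,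
    ← pow_two]
  simp only [rodrigues, mul_add, add_mul, one_mul, mul_one, hK₃, hK₃', hK₄,
    ← pow_two K, mul_smul_comm, smul_mul_assoc, Real.sin_add, Real.cos_add]
  module

end Algebra

section Calculus

variable {A : Type*} [NormedRing A] [NormedAlgebra ℝ A]

theorem contDiff_rodrigues {n : WithTop ℕ∞} (K : A) : ContDiff ℝ n (rodrigues K) := by
  unfold rodrigues
  fun_prop

theorem hasDerivAt_rodrigues {K : A} (hK : K ^ 3 = -K) (s : ℝ) :
    HasDerivAt (rodrigues K) (K * rodrigues K s) s := by
  have h := (((Real.hasDerivAt_sin s).smul_const K).const_add 1).add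
    (((Real.hasDerivAt_cos s).const_sub 1).smul_const (K ^ 2))
  refine h.congr_deriv ?_
  have hK₃ : K * K ^ 2 = -K := by rw [← pow_succ', hK]
  simp only [rodrigues, mul_add, mul_one, mul_smul_comm, hK₃, ← pow_two]
  module

end Calculus

end Rodrigues

section SpecialOrthogonalGroup

open Matrix

variable {n R : Type*} [Fintype n] [DecidableEq n] [CommRing R] {A : Matrix n n R}

theorem mem_specialOrthogonalGroup_iff_transpose_mul :
    A ∈ specialOrthogonalGroup n R ↔ Aᵀ * A = 1 ∧ A.det = 1 := by
  rw [mem_specialOrthogonalGroup_iff, mem_orthogonalGroup_iff']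

theorem transpose_mem_specialOrthogonalGroup (hA : A ∈ specialOrthogonalGroup n R) :
    Aᵀ ∈ specialOrthogonalGroup n R := by
  rw [mem_specialOrthogonalGroup_iff_transpose_mul] at hA ⊢
  exact ⟨by rw [transpose_transpose]; exact mul_eq_one_comm.mp hA.1, by rw [det_transpose, hA.2]⟩

theorem adjugate_eq_transpose_of_mem_specialOrthogonalGroup
    (hA : A ∈ specialOrthogonalGroup n R) : A.adjugate = Aᵀ := by
  obtain ⟨hAA, hdet⟩ := mem_specialOrthogonalGroup_iff_transpose_mul.mp hA
  calc A.adjugate = (Aᵀ * A) * A.adjugate := by rw [hAA, one_mul]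
    _ = Aᵀ := by rw [mul_assoc, mul_adjugate, hdet, one_smul, mul_one]

theorem rodrigues_mem_specialOrthogonalGroup {K : Matrix n n ℝ} (hK : K ^ 3 = -K)
    (hskew : Kᵀ = -K) (s : ℝ) : rodrigues K s ∈ specialOrthogonalGroup n ℝ := by
  have horth (t : ℝ) : (rodrigues K t)ᵀ * rodrigues K t = 1 := by
    have htr : (rodrigues K t)ᵀ = rodrigues K (-t) := by
      rw [← rodrigues_neg_left, ← hskew]
      simp [rodrigues, transpose_pow]
    rw [htr, ← rodrigues_add hK, neg_add_cancel, rodrigues_zero]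
  refine mem_specialOrthogonalGroup_iff_transpose_mul.mpr ⟨horth s, ?_⟩
  -- The determinant is a square, since `rodrigues K s` has the square root `rodrigues K (s / 2)`.
  calc (rodrigues K s).det
      = (rodrigues K (s / 2) * rodrigues K (s / 2)).det := by rw [← rodrigues_add hK, add_halves]
    _ = ((rodrigues K (s / 2))ᵀ * rodrigues K (s / 2)).det := by simp only [det_mul, det_transpose]
    _ = 1 := by rw [horth, det_one]

end SpecialOrthogonalGroup

section Rolls

open Matrix

/-- The infinitesimal rotation of a sphere rolling with unit speed in the direction `θ`. -/
def rollGenerator (θ : ℝ) : Matrix (Fin 3) (Fin 3) ℝ :=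
  -rollM (Real.cos θ) (Real.sin θ)

theorem transpose_rollGenerator (θ : ℝ) : (rollGenerator θ)ᵀ = -rollGenerator θ := by
  ext i j
  fin_cases i <;> fin_cases j <;> simp [rollGenerator, rollM]

theorem rollGenerator_sq (θ : ℝ) : rollGenerator θ ^ 2 =
    !![-Real.cos θ ^ 2, -(Real.cos θ * Real.sin θ), 0;
      -(Real.cos θ * Real.sin θ), -Real.sin θ ^ 2, 0;
      0, 0, -1] := by
  have h : -(Real.cos θ * Real.cos θ) + -(Real.sin θ * Real.sin θ) = -1 := by
    linarith [Real.cos_sq_add_sin_sq θ]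
  ext i j
  fin_cases i <;> fin_cases j <;> simp [rollGenerator, rollM, pow_two, h, mul_comm]

theorem rollGenerator_pow_three (θ : ℝ) : rollGenerator θ ^ 3 = -rollGenerator θ := by
  rw [pow_succ, rollGenerator_sq]
  ext i j
  fin_cases i <;> fin_cases j <;> simp [rollGenerator, rollM] <;> grind [Real.sin_sq_add_cos_sq]

/-- The rotation `exp (-s • M(cos θ, sin θ))` of a sphere that has rolled the distance `s` in the
direction `θ`. -/
def rollRot (θ s : ℝ) : Matrix (Fin 3) (Fin 3) ℝ :=
  rodrigues (rollGenerator θ) s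

theorem rollRot_mem_specialOrthogonalGroup (θ s : ℝ) :
    rollRot θ s ∈ specialOrthogonalGroup (Fin 3) ℝ :=
  rodrigues_mem_specialOrthogonalGroup (rollGenerator_pow_three θ) (transpose_rollGenerator θ) s

theorem rollRot_mulVec_single_two (θ s : ℝ) : rollRot θ s *ᵥ Pi.single 2 1 =
    ![Real.sin s * Real.cos θ, Real.sin s * Real.sin θ, Real.cos s] := by
  rw [rollRot, rodrigues, rollGenerator_sq, mulVec_single_one]
  ext i
  fin_cases i <;> simp [rollGenerator, rollM]

theorem rollRot_pi (θ : ℝ) : rollRot θ Real.pi =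
    !![-Real.cos (2 * θ), -Real.sin (2 * θ), 0;
      -Real.sin (2 * θ), Real.cos (2 * θ), 0;
      0, 0, -1] := by
  rw [rollRot, rodrigues, rollGenerator_sq, Real.sin_two_mul, Real.cos_two_mul]
  ext i j
  fin_cases i <;> fin_cases j <;> simp <;> grind [Real.sin_sq_add_cos_sq]

theorem exists_rollRot_mulVec_single_two_eq {v : Fin 3 → ℝ} (hv : v ⬝ᵥ v = 1) :
    ∃ θ s, rollRot θ s *ᵥ Pi.single 2 1 = v := by
  have hv' : v 0 ^ 2 + v 1 ^ 2 + v 2 ^ 2 = 1 := by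
    simpa [dotProduct, Fin.sum_univ_three, pow_two] using hv
  let z : ℂ := ⟨v 0, v 1⟩
  have hsin : Real.sin (Real.arccos (v 2)) = ‖z‖ := by
    rw [Real.sin_arccos, Complex.norm_eq_sqrt_sq_add_sq]
    congr 1
    linarith
  have hcos : Real.cos (Real.arccos (v 2)) = v 2 := Real.cos_arccos (by nlinarith) (by nlinarith)
  refine ⟨z.arg, Real.arccos (v 2), ?_⟩
  rw [rollRot_mulVec_single_two, hsin, hcos, Complex.norm_mul_cos_arg, Complex.norm_mul_sin_arg]
  ext i
  fin_cases i <;> rfl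

/-- The rotation by the angle `δ` about the third axis. -/
def verticalRot (δ : ℝ) : Matrix (Fin 3) (Fin 3) ℝ :=
  !![Real.cos δ, -Real.sin δ, 0; Real.sin δ, Real.cos δ, 0; 0, 0, 1]

theorem rollRot_pi_mul_rollRot_zero_pi (θ : ℝ) :
    rollRot θ Real.pi * rollRot 0 Real.pi = verticalRot (2 * θ) := by
  rw [rollRot_pi, rollRot_pi, verticalRot]
  ext i j
  fin_cases i <;> fin_cases j <;> simp

theorem exists_eq_verticalRot {g : Matrix (Fin 3) (Fin 3) ℝ}
    (hg : g ∈ specialOrthogonalGroup (Fin 3) ℝ) (hfix : g *ᵥ Pi.single 2 1 = Pi.single 2 1) :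
    ∃ δ, g = verticalRot δ := by
  have hcol (i : Fin 3) : g i 2 = (Pi.single 2 1 : Fin 3 → ℝ) i := by
    rw [← hfix, mulVec_single_one, col_apply]
  have h02 : g 0 2 = 0 := hcol 0
  have h12 : g 1 2 = 0 := hcol 1
  have h22 : g 2 2 = 1 := hcol 2
  have hadj (i j : Fin 3) : g.adjugate i j = g j i := by
    rw [adjugate_eq_transpose_of_mem_specialOrthogonalGroup hg, transpose_apply]
  have h20 : g 2 0 = 0 := by simpa [adjugate_fin_three, h02, h12] using (hadj 0 2).symm
  have h21 : g 2 1 = 0 := by simpa [adjugate_fin_three, h02, h12] using (hadj 1 2).symm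
  have h11 : g 1 1 = g 0 0 := by simpa [adjugate_fin_three, h12, h22] using hadj 0 0
  have h01 : g 0 1 = -g 1 0 := by simpa [adjugate_fin_three, h12, h22] using (hadj 1 0).symm
  let z : ℂ := ⟨g 0 0, g 1 0⟩
  have hz : ‖z‖ = 1 := by
    have hdet : g.det = 1 := hg.2
    rw [Complex.norm_eq_sqrt_sq_add_sq, Real.sqrt_eq_one, ← hdet, det_fin_three, h02, h12, h20, h21,
      h22, h11, h01]
    ring
  have hcos : Real.cos z.arg = g 0 0 := by simpa [hz] using Complex.norm_mul_cos_arg z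
  have hsin : Real.sin z.arg = g 1 0 := by simpa [hz] using Complex.norm_mul_sin_arg z
  refine ⟨z.arg, ?_⟩
  rw [eta_fin_three g, verticalRot, hcos, hsin, h01, h02, h11, h12, h20, h21, h22]

theorem exists_eq_rollRot_mul_rollRot_mul_rollRot {g : Matrix (Fin 3) (Fin 3) ℝ}
    (hg : g ∈ specialOrthogonalGroup (Fin 3) ℝ) : ∃ θ₁ s₁ θ₂ s₂ θ₃ s₃,
      g = rollRot θ₁ s₁ * (rollRot θ₂ s₂ * rollRot θ₃ s₃) := by
  have hgg : gᵀ * g = 1 := (mem_specialOrthogonalGroup_iff_transpose_mul.mp hg).1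
  have hunit : (g *ᵥ Pi.single 2 1) ⬝ᵥ (g *ᵥ Pi.single 2 1) = 1 := by
    rw [dotProduct_mulVec, vecMul_mulVec, hgg, vecMul_one, single_one_dotProduct, Pi.single_eq_same]
  obtain ⟨θ, s, hpole⟩ := exists_rollRot_mulVec_single_two_eq hunit
  have hR := rollRot_mem_specialOrthogonalGroup θ s
  have hRR : (rollRot θ s)ᵀ * rollRot θ s = 1 :=
    (mem_specialOrthogonalGroup_iff_transpose_mul.mp hR).1
  obtain ⟨δ, hδ⟩ := exists_eq_verticalRot (mul_mem (transpose_mem_specialOrthogonalGroup hR) hg)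
    (by rw [← mulVec_mulVec, ← hpole, mulVec_mulVec, hRR, one_mulVec])
  refine ⟨θ, s, δ / 2, Real.pi, 0, Real.pi, ?_⟩
  rw [rollRot_pi_mul_rollRot_zero_pi, mul_div_cancel₀ δ two_ne_zero, ← hδ, ← mul_assoc,
    mul_eq_one_comm.mp hRR, one_mul]

end Rolls

theorem exists_eq_exp_add_exp {p : ℂ} (hp : ‖p‖ ≤ 2) :
    ∃ α β : ℝ, p = Complex.exp (α * Complex.I) + Complex.exp (β * Complex.I) := by
  set ψ := Real.arccos (‖p‖ / 2)
  have hψ : ‖p‖ = 2 * Real.cos ψ := by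
    rw [Real.cos_arccos (by linarith [norm_nonneg p]) (by linarith)]
    ring
  refine ⟨p.arg + ψ, p.arg - ψ, Complex.ext ?_ ?_⟩
  · rw [← Complex.norm_mul_cos_arg, hψ, Complex.add_re, Complex.exp_ofReal_mul_I_re,
      Complex.exp_ofReal_mul_I_re, Real.cos_add, Real.cos_sub]
    ring
  · rw [← Complex.norm_mul_sin_arg, hψ, Complex.add_im, Complex.exp_ofReal_mul_I_im,
      Complex.exp_ofReal_mul_I_im, Real.sin_add, Real.sin_sub]
    ring

section RollingCurves

open Matrix
open scoped Matrix.Norms.Operator ContDiff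

/-- The rolling form `M`, as a linear map on the plane identified with `ℂ`. -/
def rollForm : ℂ →ₗ[ℝ] Matrix (Fin 3) (Fin 3) ℝ where
  toFun z := rollM z.re z.im
  map_add' z w := by ext i j; fin_cases i <;> fin_cases j <;> simp [rollM, add_comm]
  map_smul' r z := by ext i j; fin_cases i <;> fin_cases j <;> simp [rollM]

theorem rollForm_apply (z : ℂ) : rollForm z = rollM z.re z.im := rfl

/-- A smooth curve `(a, z)` in `SO(3) × ℂ` satisfying the rolling constraint `a' = -M(x', y') a`,
where `z = x + i y`. -/
structure IsRollingCurve (a : ℝ → Matrix (Fin 3) (Fin 3) ℝ) (z : ℝ → ℂ) : Prop where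
  contDiff_rotation : ContDiff ℝ ∞ a
  contDiff_position : ContDiff ℝ ∞ z
  mem_specialOrthogonalGroup : ∀ t, a t ∈ specialOrthogonalGroup (Fin 3) ℝ
  hasDerivAt_rotation : ∀ t, HasDerivAt a (-(rollForm (deriv z t) * a t)) t

namespace IsRollingCurve

variable {a b : ℝ → Matrix (Fin 3) (Fin 3) ℝ} {z w : ℝ → ℂ}

theorem hasDerivAt_position (h : IsRollingCurve a z) (t : ℝ) : HasDerivAt z (deriv z t) t :=
  (h.contDiff_position.differentiable (by simp) t).hasDerivAt

theorem const {g : Matrix (Fin 3) (Fin 3) ℝ} (hg : g ∈ specialOrthogonalGroup (Fin 3) ℝ) (p : ℂ) :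
    IsRollingCurve (fun _ => g) (fun _ => p) where
  contDiff_rotation := contDiff_const
  contDiff_position := contDiff_const
  mem_specialOrthogonalGroup _ := hg
  hasDerivAt_rotation t := (hasDerivAt_const t g).congr_deriv (by simp)

theorem straight (θ : ℝ) :
    IsRollingCurve (rollRot θ) (fun s => s * Complex.exp (θ * Complex.I)) where
  contDiff_rotation := contDiff_rodrigues _
  contDiff_position := Complex.ofRealCLM.contDiff.mul contDiff_const
  mem_specialOrthogonalGroup := rollRot_mem_specialOrthogonalGroup θ
  hasDerivAt_rotation s := by
    have hderiv : deriv (fun s : ℝ => s * Complex.exp (θ * Complex.I)) s =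
        Complex.exp (θ * Complex.I) := by
      simpa using ((hasDerivAt_id s).ofReal_comp.mul_const (Complex.exp (θ * Complex.I))).deriv
    rw [hderiv, rollForm_apply, Complex.exp_ofReal_mul_I_re, Complex.exp_ofReal_mul_I_im, ← neg_mul]
    exact hasDerivAt_rodrigues (rollGenerator_pow_three θ) s

theorem comp (h : IsRollingCurve a z) {f : ℝ → ℝ} (hf : ContDiff ℝ ∞ f) :
    IsRollingCurve (a ∘ f) (z ∘ f) where
  contDiff_rotation := h.contDiff_rotation.comp hf
  contDiff_position := h.contDiff_position.comp hf
  mem_specialOrthogonalGroup t := h.mem_specialOrthogonalGroup (f t)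
  hasDerivAt_rotation t := by
    have hf' := (hf.differentiable (by simp) t).hasDerivAt
    rw [((h.hasDerivAt_position (f t)).scomp t hf').deriv, map_smul, smul_mul_assoc, ← smul_neg]
    exact (h.hasDerivAt_rotation (f t)).scomp t hf'

/-- The constraint is invariant under right translations only, so the left factor has to be `1`
while the right one moves. -/
theorem mul (hb : IsRollingCurve b w) (ha : IsRollingCurve a z)
    (h : ∀ t, deriv z t = 0 ∨ b t = 1) : IsRollingCurve (b * a) (w + z) where
  contDiff_rotation := hb.contDiff_rotation.mul ha.contDiff_rotation
  contDiff_position := hb.contDiff_position.add ha.contDiff_position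
  mem_specialOrthogonalGroup t :=
    mul_mem (hb.mem_specialOrthogonalGroup t) (ha.mem_specialOrthogonalGroup t)
  hasDerivAt_rotation t := by
    refine ((hb.hasDerivAt_rotation t).mul (ha.hasDerivAt_rotation t)).congr_deriv ?_
    rw [((hb.hasDerivAt_position t).add (ha.hasDerivAt_position t)).deriv, map_add, Pi.mul_apply]
    rcases h t with hz | hb1
    · rw [hz]; simp [mul_assoc]
    · rw [hb1]; simp [add_mul, add_comm]

theorem contDiff_apply (h : IsRollingCurve a z) (i j : Fin 3) : ContDiff ℝ ∞ fun t => a t i j :=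
  (entryLinearMap ℝ ℝ i j).toContinuousLinearMap.contDiff.comp h.contDiff_rotation

theorem contDiff_re (h : IsRollingCurve a z) : ContDiff ℝ ∞ fun t => (z t).re :=
  Complex.reCLM.contDiff.comp h.contDiff_position

theorem contDiff_im (h : IsRollingCurve a z) : ContDiff ℝ ∞ fun t => (z t).im :=
  Complex.imCLM.contDiff.comp h.contDiff_position

theorem hasDerivAt_apply (h : IsRollingCurve a z) (t : ℝ) (i j : Fin 3) :
    HasDerivAt (fun s => a s i j)
      ((-(rollM (deriv (fun s => (z s).re) t) (deriv (fun s => (z s).im) t) * a t)) i j) t := by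
  have hre : deriv (fun s => (z s).re) t = (deriv z t).re :=
    (Complex.reCLM.hasFDerivAt.comp_hasDerivAt t (h.hasDerivAt_position t)).deriv
  have him : deriv (fun s => (z s).im) t = (deriv z t).im :=
    (Complex.imCLM.hasFDerivAt.comp_hasDerivAt t (h.hasDerivAt_position t)).deriv
  rw [hre, him, ← rollForm_apply]
  exact (entryLinearMap ℝ ℝ i j).toContinuousLinearMap.hasFDerivAt.comp_hasDerivAt t
    (h.hasDerivAt_rotation t)

end IsRollingCurve

/-- `(g, p)` can be reached from `(1, 0)` by a rolling curve. The curve is required to be at rest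
outside `[0, 1]`, so that such curves can be concatenated smoothly. -/
def RollReachable (g : Matrix (Fin 3) (Fin 3) ℝ) (p : ℂ) : Prop :=
  ∃ a z, IsRollingCurve a z ∧ (∀ t ≤ 0, a t = 1 ∧ z t = 0) ∧ ∀ t ≥ 1, a t = g ∧ z t = p

theorem rollReachable_rollRot (θ l : ℝ) :
    RollReachable (rollRot θ l) (l * Complex.exp (θ * Complex.I)) := by
  refine ⟨_, _, (IsRollingCurve.straight θ).comp (f := fun t => l * Real.smoothTransition t)
    (contDiff_const.mul Real.smoothTransition.contDiff), fun t ht => ?_, fun t ht => ?_⟩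
  · simp [Real.smoothTransition.zero_of_nonpos ht, rollRot, rodrigues_zero]
  · simp [Real.smoothTransition.one_of_one_le ht]

theorem RollReachable.mul {g h : Matrix (Fin 3) (Fin 3) ℝ} {p q : ℂ}
    (hh : RollReachable h q) (hg : RollReachable g p) : RollReachable (h * g) (q + p) := by
  obtain ⟨b, w, hbw, b_start, b_finish⟩ := hh
  obtain ⟨a, z, haz, a_start, a_finish⟩ := hg
  have haz_fast : IsRollingCurve (a ∘ fun t => 2 * t) (z ∘ fun t => 2 * t) :=
    haz.comp (by fun_prop)
  have hbw_late : IsRollingCurve (b ∘ fun t => 2 * t - 1) (w ∘ fun t => 2 * t - 1) :=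
    hbw.comp (by fun_prop)
  refine ⟨_, _, hbw_late.mul haz_fast fun t => ?_, fun t ht => ?_, fun t ht => ?_⟩
  · rcases le_or_gt t (1 / 2) with ht | ht
    · exact .inr (b_start _ (by linarith)).1
    · left
      have hconst : z ∘ (fun t => 2 * t) =ᶠ[nhds t] fun _ => p := by
        filter_upwards [eventually_gt_nhds ht] with s hs
        exact (a_finish _ (by linarith)).2
      rw [hconst.deriv_eq, deriv_const]
  · simp [a_start (2 * t) (by linarith), b_start (2 * t - 1) (by linarith)]
  · simp [a_finish (2 * t) (by linarith), b_finish (2 * t - 1) (by linarith)]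

theorem rollReachable_one (p : ℂ) : RollReachable 1 p := by
  obtain ⟨n, hn⟩ := exists_nat_gt (‖p‖ / (2 * (2 * Real.pi)))
  have hn0 : (0 : ℝ) < n := lt_of_le_of_lt (by positivity) hn
  have hl : 0 < n * (2 * Real.pi) := by positivity
  set l : ℝ := n * (2 * Real.pi) with hl_def
  have hnorm : ‖p / l‖ ≤ 2 := by
    rw [norm_div, Complex.norm_of_nonneg hl.le, div_le_iff₀ hl]
    rw [div_lt_iff₀ (by positivity)] at hn
    linarith
  obtain ⟨α, β, hαβ⟩ := exists_eq_exp_add_exp hnorm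
  have hturn (θ : ℝ) : RollReachable 1 (l * Complex.exp (θ * Complex.I)) := by
    have h := rollReachable_rollRot θ l
    rwa [rollRot, hl_def, rodrigues_nat_mul_two_pi, ← hl_def] at h
  convert (hturn α).mul (hturn β) using 1
  · rw [one_mul]
  · rw [← mul_add, ← hαβ, mul_div_cancel₀ _ (Complex.ofReal_ne_zero.mpr hl.ne')]

theorem exists_rollReachable {g : Matrix (Fin 3) (Fin 3) ℝ}
    (hg : g ∈ specialOrthogonalGroup (Fin 3) ℝ) : ∃ p, RollReachable g p := by
  obtain ⟨θ₁, s₁, θ₂, s₂, θ₃, s₃, rfl⟩ := exists_eq_rollRot_mul_rollRot_mul_rollRot hg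
  exact ⟨_, (rollReachable_rollRot θ₁ s₁).mul
    ((rollReachable_rollRot θ₂ s₂).mul (rollReachable_rollRot θ₃ s₃))⟩

theorem rollReachable_of_mem_specialOrthogonalGroup {g : Matrix (Fin 3) (Fin 3) ℝ}
    (hg : g ∈ specialOrthogonalGroup (Fin 3) ℝ) (p : ℂ) : RollReachable g p := by
  obtain ⟨q, hq⟩ := exists_rollReachable hg
  simpa using (rollReachable_one (p - q)).mul hq

theorem exists_isRollingCurve {g₀ g₁ : Matrix (Fin 3) (Fin 3) ℝ}
    (h₀ : g₀ ∈ specialOrthogonalGroup (Fin 3) ℝ) (h₁ : g₁ ∈ specialOrthogonalGroup (Fin 3) ℝ)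
    (p₀ p₁ : ℂ) :
    ∃ a z, IsRollingCurve a z ∧ (a 0 = g₀ ∧ z 0 = p₀) ∧ (a 1 = g₁ ∧ z 1 = p₁) := by
  obtain ⟨b, w, hbw, hstart, hfinish⟩ := rollReachable_of_mem_specialOrthogonalGroup
    (mul_mem h₁ (transpose_mem_specialOrthogonalGroup h₀)) (p₁ - p₀)
  refine ⟨_, _, hbw.mul (.const h₀ p₀) fun t => .inl (deriv_const t p₀), ?_, ?_⟩
  · simp [hstart 0 le_rfl]
  · simp [hfinish 1 le_rfl, mul_assoc, (mem_specialOrthogonalGroup_iff_transpose_mul.mp h₀).1]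

end RollingCurves

/-- Any two points of `SO(3) × ℝ²` can be joined by a smooth curve
satisfying the rolling constraint `a'(t) = −M(x'(t), y'(t)) · a(t)`. -/
theorem rolling_constraint_bracket_generating
    (a₀ a₁ : Matrix (Fin 3) (Fin 3) ℝ) (x₀ y₀ x₁ y₁ : ℝ)
    (h₀ : a₀ᵀ * a₀ = 1 ∧ a₀.det = 1) (h₁ : a₁ᵀ * a₁ = 1 ∧ a₁.det = 1) :
    ∃ (a : ℝ → Matrix (Fin 3) (Fin 3) ℝ) (x y : ℝ → ℝ),
      (∀ i j, ContDiff ℝ (⊤ : ℕ∞) fun t => a t i j) ∧ ContDiff ℝ (⊤ : ℕ∞) x ∧ ContDiff ℝ (⊤ : ℕ∞) y ∧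
      (∀ t : ℝ, (a t)ᵀ * a t = 1 ∧ (a t).det = 1) ∧
      (a 0 = a₀ ∧ x 0 = x₀ ∧ y 0 = y₀) ∧
      (a 1 = a₁ ∧ x 1 = x₁ ∧ y 1 = y₁) ∧
      (∀ t ∈ Set.Icc (0 : ℝ) 1, ∀ i j,
        HasDerivAt (fun s => a s i j)
          ((-(rollM (deriv x t) (deriv y t) * a t)) i j) t) := by
  rw [← mem_specialOrthogonalGroup_iff_transpose_mul] at h₀ h₁
  obtain ⟨a, z, h, ⟨ha₀, hz₀⟩, ha₁, hz₁⟩ := exists_isRollingCurve h₀ h₁ ⟨x₀, y₀⟩ ⟨x₁, y₁⟩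
  exact ⟨a, fun t => (z t).re, fun t => (z t).im,
    h.contDiff_apply, h.contDiff_re, h.contDiff_im,
    fun t => mem_specialOrthogonalGroup_iff_transpose_mul.mp (h.mem_specialOrthogonalGroup t),
    ⟨ha₀, congrArg Complex.re hz₀, congrArg Complex.im hz₀⟩,
    ⟨ha₁, congrArg Complex.re hz₁, congrArg Complex.im hz₁⟩,
    fun t _ => h.hasDerivAt_apply t⟩

end
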